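/- arXiv:2008.02008 — 3 statements merged into one kernel-verified Lean document; each statement's English description precedes it below -/
import Mathlib

section
/- Let k be a positive integer and α_1, ..., α_k positive reals. Then there exist a positive integer m and a set A ⊂ R with |A| = m+1 such that for every positive integer n, every subset B ⊆ A^n with |B| > m^n contains k+1 points y^0, ..., y^k with ‖y^s - y^t‖_∞ = α_{s+1} + ... + α_t for all 0 ≤ s < t ≤ k (an isometric copy of the baton B(α_1,...,α_k) in the max metric). -/
/-!
Add to the finite set `P ⊆ ℝ` to be copied a grid whose mesh `δ` is the least distance between two
distinct points of `P`, and let `a₀ < ⋯ < aₘ` be the resulting set: consecutive terms differ by at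
most `δ`. Let `B` be a set of more than `m ^ n` words of length `n` over these `m + 1` letters, and
induct on `n`. If some tail `x` extends to a word of `B` by every possible first letter, then the
words `cons p x` with `p ∈ P` form a copy of `P`. Otherwise every tail `x` has a forbidden first
letter `q x`; number the `m` remaining letters in increasing order. By pigeonhole more than
`m ^ (n - 1)` tails extend by their `j`-th remaining letter for a common `j`. That letter is always
`aⱼ` or `aⱼ₊₁`, so in the sup metric it does not change a distance which is already at least `δ`,
and a copy of `P` among these tails lifts to a copy in `B`.
-/

open scoped Finset

section Pigeonhole

theorem exists_lt_card_succAbove_mem {W : Type*} [Fintype W] [DecidableEq W] {m N : ℕ}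
    {B : Finset (Fin (m + 1) × W)} {q : W → Fin (m + 1)} (hq : ∀ x, (q x, x) ∉ B)
    (hB : m * N < #B) : ∃ j : Fin m, N < #{x | ((q x).succAbove j, x) ∈ B} := by
  let tails (j : Fin m) : Finset W := {x | ((q x).succAbove j, x) ∈ B}
  let extend (j : Fin m) (x : W) : Fin (m + 1) × W := ((q x).succAbove j, x)
  have hcover : B ⊆ Finset.univ.biUnion fun j ↦ (tails j).image (extend j) := by
    rintro ⟨p, x⟩ hpx
    obtain ⟨j, rfl⟩ : ∃ j, (q x).succAbove j = p :=
      Fin.exists_succAbove_eq fun h ↦ hq x (h ▸ hpx)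
    simpa [tails, extend] using hpx
  have hsum : ∑ _j : Fin m, N < ∑ j, #(tails j) :=
    calc ∑ _j : Fin m, N = m * N := by simp
      _ < #B := hB
      _ ≤ #(Finset.univ.biUnion fun j ↦ (tails j).image (extend j)) := Finset.card_le_card hcover
      _ ≤ ∑ j, #((tails j).image (extend j)) := Finset.card_biUnion_le
      _ ≤ ∑ j, #(tails j) := Finset.sum_le_sum fun _ _ ↦ Finset.card_image_le
  obtain ⟨j, -, hj⟩ := Finset.exists_lt_of_sum_lt hsum
  exact ⟨j, hj⟩

theorem exists_forall_cons_mem_or_exists_lt_card {m n N : ℕ}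
    {B : Finset (Fin (n + 1) → Fin (m + 1))} (hB : m * N < #B) :
    (∃ x : Fin n → Fin (m + 1), ∀ p, (Fin.cons p x : Fin (n + 1) → Fin (m + 1)) ∈ B) ∨
      ∃ (q : (Fin n → Fin (m + 1)) → Fin (m + 1)) (j : Fin m),
        N < #{x | (Fin.cons ((q x).succAbove j) x : Fin (n + 1) → Fin (m + 1)) ∈ B} := by
  refine or_iff_not_imp_left.2 fun hfull ↦ ?_
  push Not at hfull
  choose q hq using hfull
  let split := (Fin.consEquiv fun _ : Fin (n + 1) ↦ Fin (m + 1)).symm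
  have mem_split (p : Fin (m + 1)) (x : Fin n → Fin (m + 1)) :
      (p, x) ∈ B.map split.toEmbedding ↔ (Fin.cons p x : Fin (n + 1) → Fin (m + 1)) ∈ B :=
    Finset.mem_map_equiv
  obtain ⟨j, hj⟩ := exists_lt_card_succAbove_mem (B := B.map split.toEmbedding) (q := q)
    (fun x ↦ (mem_split _ _).not.2 (hq x)) (by rwa [Finset.card_map])
  exact ⟨q, j, by simpa only [mem_split] using hj⟩

end Pigeonhole

section Congruence

variable {X ι : Type*} [PseudoMetricSpace X] {m n : ℕ} {a : Fin (m + 1) → X} {δ : ℝ}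

theorem dist_finCons (p q : X) (x y : Fin n → X) :
    dist (Fin.cons p x : Fin (n + 1) → X) (Fin.cons q y) = max (dist p q) (dist x y) := by
  simpa only [Fin.insertNth_zero'] using
    Fin.dist_insertNth_insertNth (α := fun _ ↦ X) 0 p q x y

theorem dist_succAbove_succAbove_le
    (gap : ∀ j : Fin m, dist (a j.castSucc) (a j.succ) ≤ δ) (p q : Fin (m + 1)) (j : Fin m) :
    dist (a (p.succAbove j)) (a (q.succAbove j)) ≤ δ := by
  have hδ : 0 ≤ δ := dist_nonneg.trans (gap j)
  have succAbove_eq (p : Fin (m + 1)) : p.succAbove j = j.castSucc ∨ p.succAbove j = j.succ :=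
    (Fin.castSucc_lt_or_lt_succ p j).imp
      (Fin.succAbove_of_castSucc_lt p j) (Fin.succAbove_of_lt_succ p j)
  rcases succAbove_eq p with hp | hp <;> rcases succAbove_eq q with hq | hq <;> rw [hp, hq]
  · rwa [dist_self]
  · exact gap j
  · rw [dist_comm]
    exact gap j
  · rwa [dist_self]

theorem exists_congruent_words_of_pow_lt_card {σ : ι → Fin (m + 1)}
    (gap : ∀ j : Fin m, dist (a j.castSucc) (a j.succ) ≤ δ)
    (sep : Pairwise fun s t ↦ δ ≤ dist (a (σ s)) (a (σ t)))
    {B : Finset (Fin n → Fin (m + 1))} (hB : m ^ n < #B) :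
    ∃ y : ι → Fin n → Fin (m + 1), (∀ s, y s ∈ B) ∧ Congruent (fun s ↦ a ∘ y s) (a ∘ σ) := by
  simp only [congruent_iff_pairwise_dist_eq, Function.comp_apply]
  induction n with
  | zero => exact absurd hB (by simpa using Finset.card_le_one_of_subsingleton B)
  | succ n ih =>
    rw [pow_succ'] at hB
    obtain ⟨x, hx⟩ | ⟨q, j, hj⟩ := exists_forall_cons_mem_or_exists_lt_card hB
    · refine ⟨fun s ↦ Fin.cons (σ s) x, fun s ↦ hx (σ s), fun s t _ ↦ ?_⟩
      simp only [Fin.comp_cons, dist_finCons, dist_self, max_eq_left dist_nonneg]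
    · obtain ⟨y, hyB, hy⟩ := ih hj
      refine ⟨fun s ↦ Fin.cons ((q (y s)).succAbove j) (y s),
        fun s ↦ (Finset.mem_filter.1 (hyB s)).2, fun s t hst ↦ ?_⟩
      have hhead := (dist_succAbove_succAbove_le gap (q (y s)) (q (y t)) j).trans (sep hst)
      simp only [Fin.comp_cons, dist_finCons, hy hst, max_eq_right hhead]

theorem exists_congruent_of_pow_lt_card {p : ι → X}
    (gap : ∀ j : Fin m, dist (a j.castSucc) (a j.succ) ≤ δ)
    (sep : Pairwise fun s t ↦ δ ≤ dist (p s) (p t)) (hp : ∀ s, p s ∈ Set.range a)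
    {B : Finset (Fin n → X)} (hBa : ∀ x ∈ B, ∀ i, x i ∈ Set.range a) (hB : m ^ n < #B) :
    ∃ y : ι → Fin n → X, (∀ s, y s ∈ B) ∧ Congruent y p := by
  classical
  choose σ hσ using hp
  obtain rfl : a ∘ σ = p := funext hσ
  let words : Finset (Fin n → Fin (m + 1)) := {x | a ∘ x ∈ B}
  have hcover : B ⊆ words.image (a ∘ ·) := by
    intro x hx
    choose w hw using hBa x hx
    obtain rfl : a ∘ w = x := funext hw
    exact Finset.mem_image_of_mem _ (by simpa [words] using hx)
  have hwords : m ^ n < #words :=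
    hB.trans_le ((Finset.card_le_card hcover).trans Finset.card_image_le)
  obtain ⟨y, hyB, hy⟩ := exists_congruent_words_of_pow_lt_card gap sep hwords
  exact ⟨fun s ↦ a ∘ y s, fun s ↦ (Finset.mem_filter.1 (hyB s)).2, hy⟩

end Congruence

section Gaps

variable {α : Type*}

/-- Consecutive elements of the finite set `A` are at distance at most `δ`, phrased without
enumerating `A`: every element that is not the largest is followed by another one within `δ`. -/
def GapsLE [Preorder α] [Add α] (A : Finset α) (δ : α) : Prop :=
  ∀ x ∈ A, ∀ z ∈ A, x < z → ∃ w ∈ A, w ∈ Set.Ioc x (x + δ)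

theorem GapsLE.orderEmbOfFin_succ_le [LinearOrder α] [Add α] {A : Finset α} {δ : α}
    (hA : GapsLE A δ) {m : ℕ} (hm : #A = m + 1) (j : Fin m) :
    A.orderEmbOfFin hm j.succ ≤ A.orderEmbOfFin hm j.castSucc + δ := by
  obtain ⟨w, hwA, hjw, hwj⟩ := hA _ (A.orderEmbOfFin_mem hm j.castSucc) _
    (A.orderEmbOfFin_mem hm j.succ) ((A.orderEmbOfFin hm).strictMono Fin.castSucc_lt_succ)
  obtain ⟨i, rfl⟩ : w ∈ Set.range (A.orderEmbOfFin hm) := by rwa [Finset.range_orderEmbOfFin]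
  have hji : j.castSucc < i := (A.orderEmbOfFin hm).lt_iff_lt.1 hjw
  exact ((A.orderEmbOfFin hm).monotone (Fin.castSucc_lt_iff_succ_le.1 hji)).trans hwj

theorem exists_superset_gapsLE [AddCommGroup α] [LinearOrder α] [IsOrderedAddMonoid α]
    [Archimedean α] (P : Finset α) {δ : α} (hδ : 0 < δ) : ∃ A, P ⊆ A ∧ GapsLE A δ := by
  obtain ⟨b, hb⟩ := (P.image fun x ↦ |x|).exists_le
  obtain ⟨N, hN⟩ := Archimedean.arch b hδ
  let grid : Finset α := (Finset.Icc (-N : ℤ) N).image (· • δ)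
  have hbound : ∀ x ∈ P ∪ grid, (-N : ℤ) • δ ≤ x ∧ x ≤ (N : ℤ) • δ := by
    intro x hx
    rcases Finset.mem_union.1 hx with hxP | hxgrid
    · rw [neg_zsmul, natCast_zsmul]
      exact abs_le.1 ((hb _ (Finset.mem_image_of_mem _ hxP)).trans hN)
    · obtain ⟨j, hj, rfl⟩ := Finset.mem_image.1 hxgrid
      rw [Finset.mem_Icc] at hj
      exact ⟨zsmul_le_zsmul_left hδ.le hj.1, zsmul_le_zsmul_left hδ.le hj.2⟩
  refine ⟨P ∪ grid, Finset.subset_union_left, fun x hx z hz hxz ↦ ?_⟩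
  rcases le_or_gt z (x + δ) with hzx | hxz'
  · exact ⟨z, hz, hxz, hzx⟩
  obtain ⟨j, ⟨hxj, hjx⟩, -⟩ := existsUnique_add_zsmul_mem_Ioc hδ 0 x
  rw [zero_add] at hxj hjx
  have hNj : -N < j := (zsmul_lt_zsmul_iff_left hδ).1 ((hbound x hx).1.trans_lt hxj)
  have hjN : j < N :=
    (zsmul_lt_zsmul_iff_left hδ).1 ((hjx.trans_lt hxz').trans_le (hbound z hz).2)
  exact ⟨j • δ, Finset.mem_union_right _ <|
    Finset.mem_image_of_mem _ <| Finset.mem_Icc.2 ⟨hNj.le, hjN.le⟩, hxj, hjx⟩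

end Gaps

section Ramsey

variable {ι : Type*} {p : ι → ℝ}

theorem GapsLE.exists_congruent {A : Finset ℝ} {δ : ℝ} (hA : GapsLE A δ)
    (sep : Pairwise fun s t ↦ δ ≤ dist (p s) (p t)) (hp : ∀ s, p s ∈ A) {m n : ℕ}
    (hm : #A = m + 1) {B : Finset (Fin n → ℝ)} (hBA : ∀ x ∈ B, ∀ i, x i ∈ A)
    (hB : m ^ n < #B) : ∃ y : ι → Fin n → ℝ, (∀ s, y s ∈ B) ∧ Congruent y p := by
  let a := A.orderEmbOfFin hm
  have gap (j : Fin m) : dist (a j.castSucc) (a j.succ) ≤ δ := by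
    rw [dist_comm, Real.dist_eq, abs_of_pos (sub_pos.2 (a.strictMono Fin.castSucc_lt_succ)),
      sub_le_iff_le_add']
    exact hA.orderEmbOfFin_succ_le hm j
  have mem_range {x : ℝ} (hx : x ∈ A) : x ∈ Set.range a := by rwa [Finset.range_orderEmbOfFin]
  exact exists_congruent_of_pow_lt_card gap sep (fun s ↦ mem_range (hp s))
    (fun x hx i ↦ mem_range (hBA x hx i)) hB

theorem exists_pos_pairwise_le_dist {X : Type*} [MetricSpace X] [Finite ι] {p : ι → X}
    (hp : p.Injective) : ∃ δ > 0, Pairwise fun s t ↦ δ ≤ dist (p s) (p t) := by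
  cases subsingleton_or_nontrivial ι
  · exact ⟨1, one_pos, Subsingleton.pairwise⟩
  have hpos : 0 < (Set.range p).infsep :=
    Set.infsep_pos_iff_nontrivial_of_finite.2 (Set.image_univ ▸ Set.nontrivial_univ.image hp)
  exact ⟨_, hpos, fun s t hst ↦ Set.infsep_le_dist_of_mem
    (Set.mem_range_self s) (Set.mem_range_self t) (hp.ne hst)⟩

theorem exists_finset_forall_pow_lt_card_exists_congruent [Finite ι] [Nontrivial ι]
    (hp : p.Injective) :
    ∃ (m : ℕ) (A : Finset ℝ), 0 < m ∧ #A = m + 1 ∧ ∀ (n : ℕ) (B : Finset (Fin n → ℝ)),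
      (∀ x ∈ B, ∀ i, x i ∈ A) → m ^ n < #B →
        ∃ y : ι → Fin n → ℝ, (∀ s, y s ∈ B) ∧ Congruent y p := by
  obtain ⟨δ, hδ, sep⟩ := exists_pos_pairwise_le_dist hp
  obtain ⟨A, hPA, hA⟩ := exists_superset_gapsLE (Set.finite_range p).toFinset hδ
  have hpA (s : ι) : p s ∈ A := hPA (by simp)
  obtain ⟨s, t, hst⟩ := exists_pair_ne ι
  have hcard : 1 < #A := Finset.one_lt_card.2 ⟨p s, hpA s, p t, hpA t, hp.ne hst⟩
  exact ⟨#A - 1, A, by lia, by lia, fun n B hBA hB ↦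
    hA.exists_congruent sep hpA (by lia) hBA hB⟩

end Ramsey

section Baton

/-- The points `0, α 0, α 0 + α 1, …, α 0 + ⋯ + α (k - 1)` of the baton `B(α 0, …, α (k - 1))`.
The step lengths are indexed from `0`, and only the first `k` of them matter. -/
def baton (k : ℕ) (α : ℕ → ℝ) (s : Fin (k + 1)) : ℝ :=
  ∑ i ∈ Finset.range s, α i

variable {k : ℕ} {α : ℕ → ℝ}

theorem baton_sub_baton {s t : Fin (k + 1)} (hst : s ≤ t) :
    baton k α t - baton k α s = ∑ i ∈ Finset.Ico (s : ℕ) t, α i :=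
  (Finset.sum_Ico_eq_sub α hst).symm

theorem strictMono_baton (hα : ∀ i < k, 0 < α i) : StrictMono (baton k α) := by
  intro s t hst
  rw [← sub_pos, baton_sub_baton hst.le]
  refine Finset.sum_pos (fun i hi ↦ hα i ?_) (Finset.nonempty_Ico.2 hst)
  have := Finset.mem_Ico.1 hi
  lia

theorem dist_baton (hα : ∀ i < k, 0 < α i) {s t : Fin (k + 1)} (hst : s ≤ t) :
    dist (baton k α s) (baton k α t) = ∑ i ∈ Finset.Ico (s : ℕ) t, α i := by
  rw [dist_comm, Real.dist_eq, abs_of_nonneg (sub_nonneg.2 ((strictMono_baton hα).monotone hst)),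
    baton_sub_baton hst]

end Baton

/-- General baton theorem: for positive reals `α_1, …, α_k` (here `α 0, …, α (k-1)`),
there exist `m` and a set `A ⊆ ℝ` of size `m+1` such that every `B ⊆ A^n` with
`|B| > m^n` contains an isometric copy of the baton `B(α_1, …, α_k)`:
points `y^0, …, y^k` with `‖y^s - y^t‖_∞ = α_{s+1} + ⋯ + α_t` for `s < t`. -/
theorem stmt_7 (k : ℕ) (hk : 0 < k) (α : ℕ → ℝ) (hα : ∀ i < k, 0 < α i) :
    ∃ (m : ℕ) (A : Finset ℝ), 0 < m ∧ A.card = m + 1 ∧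
      ∀ n : ℕ, 0 < n → ∀ B : Finset (Fin n → ℝ),
        (∀ x ∈ B, ∀ i : Fin n, x i ∈ A) → B.card > m ^ n →
        ∃ y : Fin (k + 1) → (Fin n → ℝ), (∀ s, y s ∈ B) ∧
          ∀ s t : Fin (k + 1), s < t →
            dist (y s) (y t) = ∑ i ∈ Finset.Ico (s : ℕ) (t : ℕ), α i := by
  have : Nontrivial (Fin (k + 1)) := Fin.nontrivial_iff_two_le.2 (by lia)
  obtain ⟨m, A, hm, hA, hcopy⟩ :=
    exists_finset_forall_pow_lt_card_exists_congruent (strictMono_baton hα).injective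
  refine ⟨m, A, hm, hA, fun n _ B hBA hB ↦ ?_⟩
  obtain ⟨y, hyB, hy⟩ := hcopy n B hBA hB
  exact ⟨y, hyB, fun s t hst ↦ (hy.dist_eq s t).trans (dist_baton hα hst.le)⟩
end

section
/- Every baton B(α_1,...,α_k) with positive real α_i is exponentially ℓ∞-Ramsey: there exists a constant χ > 1 such that χ(R^n_∞; B(α_1,...,α_k)) ≥ (χ + o(1))^n as n → ∞. -/
/-!
Let `V` be a finite subset of `X` containing a copy of the pattern `M` and so densely linked that
any two of its points are joined by steps no longer than the least distance in `M`; it exists as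
soon as `X` is connected, because the points reachable by such steps form a clopen set. Cut a subset
`S` of `V ^ (n + 1)` into slices indexed by `V`. In the sup metric a copy of `M` in the union of
two neighbouring slices lifts to `S`, since the extra coordinate is too small to change any
distance, and a point common to all slices gives a copy of `M` in `V × {point}`. If `S` has no
copy of `M`, then adding up the neighbouring unions along a tree spanning `V` shows that the
slices have total size at most `#V - 1` times the bound for `V ^ n`. Hence a subset of `V ^ n`
without a copy of `M` has at most `(#V - 1) ^ n` points, and by pigeonhole `χ = #V / (#V - 1)`
works.
-/

open Filter Topology
open scoped Finset

section RelConnected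

variable {X α : Type*} {r : X → X → Prop}

/-- A finite set is `r`-connected if it can be grown from a single point by repeatedly adjoining
an `r`-neighbour of a point already present. The order of growth plays the role of a rooted spanning
tree. -/
inductive RelConnected (r : X → X → Prop) : Finset X → Prop
  | singleton (x : X) : RelConnected r {x}
  | cons {V : Finset X} {v w : X} (hw : w ∉ V) (hV : RelConnected r V) (hv : v ∈ V) (hr : r v w) :
      RelConnected r (V.cons w hw)

namespace RelConnected

lemma nonempty {V : Finset X} (hV : RelConnected r V) : V.Nonempty := by
  cases hV with
  | singleton x => exact Finset.singleton_nonempty x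
  | cons hw _ _ _ => exact Finset.cons_nonempty hw

lemma exists_superset_of_reflTransGen {V : Finset X} {v w : X} (hV : RelConnected r V)
    (hv : v ∈ V) (h : Relation.ReflTransGen r v w) :
    ∃ W, RelConnected r W ∧ V ⊆ W ∧ w ∈ W := by
  induction h with
  | refl => exact ⟨V, hV, subset_rfl, hv⟩
  | @tail u w _ hr ih =>
    obtain ⟨W, hW, hVW, hu⟩ := ih
    by_cases hw : w ∈ W
    · exact ⟨W, hW, hVW, hw⟩
    · exact ⟨W.cons w hw, hW.cons hw hu hr, hVW.trans (Finset.subset_cons hw),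
        Finset.mem_cons_self w W⟩

lemma exists_superset [Nonempty X] (hr : ∀ x y, Relation.ReflTransGen r x y) {A : Set X}
    (hA : A.Finite) : ∃ V, RelConnected r V ∧ A ⊆ V := by
  induction A, hA using Set.Finite.induction_on with
  | empty => exact ⟨_, singleton (Classical.arbitrary X), Set.empty_subset _⟩
  | @insert a A _ _ ih =>
    obtain ⟨V, hV, hAV⟩ := ih
    obtain ⟨v, hv⟩ := hV.nonempty
    obtain ⟨W, hW, hVW, ha⟩ := hV.exists_superset_of_reflTransGen hv (hr v a)
    exact ⟨W, hW, Set.insert_subset ha (hAV.trans (Finset.coe_subset.2 hVW))⟩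

/-- The common part `I` makes the induction work: for a new slice `T w` next to `T v`, we have
`#(T w) + #I = #(T w ∩ I) + #(T w ∪ I)` with `T w ∪ I ⊆ T w ∪ T v`. -/
lemma exists_sum_card_add_le [DecidableEq α] {T : X → Finset α} {F : ℕ}
    (hT : ∀ v w, r v w → #(T v ∪ T w) ≤ F) {V : Finset X} (hV : RelConnected r V) :
    ∃ I : Finset α, (∀ v ∈ V, I ⊆ T v) ∧ ∑ v ∈ V, #(T v) ≤ (#V - 1) * F + #I := by
  induction hV with
  | singleton x => exact ⟨T x, by simp⟩
  | @cons V v w hw _ hv hr ih =>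
    obtain ⟨I, hI, hsum⟩ := ih
    refine ⟨T w ∩ I, ?_, ?_⟩
    · rw [Finset.forall_mem_cons]
      exact ⟨Finset.inter_subset_left, fun u hu => Finset.inter_subset_right.trans (hI u hu)⟩
    have hunion : #(T w ∪ I) ≤ F := calc
      #(T w ∪ I) ≤ #(T w ∪ T v) := Finset.card_le_card (Finset.union_subset_union_right (hI v hv))
      _ ≤ F := by rw [Finset.union_comm]; exact hT v w hr
    have hsplit : #(T w ∪ I) + #(T w ∩ I) = #(T w) + #I := Finset.card_union_add_card_inter _ _
    obtain ⟨m, hm⟩ := Nat.exists_eq_add_one.2 (Finset.card_pos.2 ⟨v, hv⟩)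
    rw [Finset.sum_cons, Finset.card_cons, hm, Nat.add_sub_cancel, Nat.succ_mul]
    rw [hm, Nat.add_sub_cancel] at hsum
    omega

end RelConnected

end RelConnected

lemma sum_card_preimage_prodMk {X Y : Type*} {S : Finset (X × Y)} {V : Finset X}
    (hS : ∀ z ∈ S, z.1 ∈ V) :
    ∑ v ∈ V, #(S.preimage (Prod.mk v) (Prod.mk_right_injective v).injOn) = #S := by
  classical
  rw [Finset.card_eq_sum_card_fiberwise hS]
  refine Finset.sum_congr rfl fun v _ => ?_
  rw [Finset.card_preimage]
  congr 1
  ext z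
  simp [Prod.ext_iff, eq_comm]

section Copies

variable {M X Y Z : Type*} [PseudoMetricSpace M] [PseudoMetricSpace X] [PseudoMetricSpace Y]
  [PseudoMetricSpace Z]

variable (M) in
/-- `T` contains an isometric copy of the space `M`. -/
def ContainsCopy (T : Set Y) : Prop :=
  ∃ f : M → Y, Isometry f ∧ ∀ x, f x ∈ T

variable (M) in
/-- Every subset of `A` with more than `F` points contains an isometric copy of `M`, that is, `F`
bounds the extremal number of `M` in `A`. -/
def ForcesCopy (A : Set Y) (F : ℕ) : Prop :=
  ∀ S : Finset Y, ↑S ⊆ A → F < #S → ContainsCopy M (S : Set Y)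

variable (M) in
/-- The distance from `u` to `v` is at most every distance between distinct points of `M`. Placing
the points of a copy of `M` in `Y` at heights `u` and `v` then gives a copy of `M` in `X × Y`. -/
def IsShortStep (u v : X) : Prop :=
  ∀ x y : M, x ≠ y → dist u v ≤ dist x y

namespace ContainsCopy

lemma of_mapsTo {g : Y → Z} (hg : Isometry g) {S : Set Y} {T : Set Z} (h : Set.MapsTo g S T)
    (hS : ContainsCopy M S) : ContainsCopy M T := by
  obtain ⟨f, hf, hfS⟩ := hS
  exact ⟨g ∘ f, hg.comp hf, fun x => h (hfS x)⟩

lemma of_forall_mk_mem {e : M → X} (he : Isometry e) {S : Set (X × Y)} {q : Y}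
    (hq : ∀ x, (e x, q) ∈ S) : ContainsCopy M S := by
  refine ⟨fun x => (e x, q), Isometry.of_dist_eq fun x y => ?_, hq⟩
  rw [Prod.dist_eq, dist_self, he.dist_eq, max_eq_left dist_nonneg]

lemma of_isShortStep {u v : X} (huv : IsShortStep M u v) {S : Set (X × Y)}
    (h : ContainsCopy M {q | (u, q) ∈ S ∨ (v, q) ∈ S}) : ContainsCopy M S := by
  obtain ⟨f, hf, hfS⟩ := h
  have hslice : ∀ x, ∃ w, (w = u ∨ w = v) ∧ (w, f x) ∈ S := fun x =>
    (hfS x).elim (fun hu => ⟨u, .inl rfl, hu⟩) fun hv => ⟨v, .inr rfl, hv⟩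
  choose e he heS using hslice
  refine ⟨fun x => (e x, f x), Isometry.of_dist_eq fun x y => ?_, heS⟩
  have hle : dist (e x) (e y) ≤ dist x y := by
    obtain rfl | hxy := eq_or_ne x y
    · simp only [dist_self, le_refl]
    have hstep := huv x y hxy
    rcases he x with hx | hx <;> rcases he y with hy | hy <;> rw [hx, hy]
    · exact (dist_self u).trans_le dist_nonneg
    · exact hstep
    · exact (dist_comm v u).trans_le hstep
    · exact (dist_self v).trans_le dist_nonneg
  rw [Prod.dist_eq, hf.dist_eq, max_eq_right hle]

end ContainsCopy

namespace ForcesCopy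

lemma of_isometryEquiv (φ : Y ≃ᵢ Z) {A : Set Z} {F : ℕ} (h : ForcesCopy M (φ ⁻¹' A) F) :
    ForcesCopy M A F := by
  intro S hSA hcard
  let S' : Finset Y := S.map φ.symm.toEquiv.toEmbedding
  have hmem : ∀ y ∈ S', φ y ∈ S := by
    simp [S']
  have hS' : ContainsCopy M (S' : Set Y) :=
    h S' (fun y hy => hSA (hmem y hy)) (hcard.trans_eq (Finset.card_map _).symm)
  exact hS'.of_mapsTo φ.isometry hmem

lemma prod {e : M → X} (he : Isometry e) {V : Finset X} (hV : RelConnected (IsShortStep M) V)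
    (heV : ∀ x, e x ∈ V) {A : Set Y} {F : ℕ} (hA : ForcesCopy M A F) :
    ForcesCopy M ((V : Set X) ×ˢ A) ((#V - 1) * F) := by
  classical
  intro S hSA hcard
  by_contra hfree
  let T : X → Finset Y := fun v => S.preimage (Prod.mk v) (Prod.mk_right_injective v).injOn
  have hmem : ∀ {v q}, q ∈ T v ↔ (v, q) ∈ S := Finset.mem_preimage
  have hunion : ∀ v w, IsShortStep M v w → #(T v ∪ T w) ≤ F := by
    intro v w hvw
    by_contra! hlt
    have hTA : (↑(T v ∪ T w) : Set Y) ⊆ A := fun q hq =>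
      (Finset.mem_union.1 hq).elim (fun h => (hSA (hmem.1 h)).2) fun h => (hSA (hmem.1 h)).2
    refine hfree (.of_isShortStep hvw ((hA _ hTA hlt).of_mapsTo isometry_id fun q hq => ?_))
    exact (Finset.mem_union.1 hq).imp hmem.1 hmem.1
  obtain ⟨I, hI, hsum⟩ := hV.exists_sum_card_add_le hunion
  rw [sum_card_preimage_prodMk fun z hz => (hSA hz).1] at hsum
  obtain ⟨q, hq⟩ : I.Nonempty := Finset.card_pos.1 (by omega)
  exact hfree (.of_forall_mk_mem he fun x => hmem.1 (hI (e x) (heV x) hq))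

lemma pi {e : M → X} (he : Isometry e) {V : Finset X} (hV : RelConnected (IsShortStep M) V)
    (heV : ∀ x, e x ∈ V) (n : ℕ) :
    ForcesCopy M (↑(Fintype.piFinset fun _ : Fin n => V) : Set (Fin n → X)) ((#V - 1) ^ n) := by
  induction n with
  | zero =>
    intro S _ hcard
    rw [pow_zero] at hcard
    exact absurd (Finset.card_le_one_of_subsingleton S) hcard.not_ge
  | succ n ih =>
    let φ : X × (Fin n → X) ≃ᵢ (Fin (n + 1) → X) :=
      ⟨Fin.insertNthEquiv (fun _ => X) 0,
        Isometry.of_dist_eq fun z w =>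
          Fin.dist_insertNth_insertNth (α := fun _ => X) 0 z.1 w.1 z.2 w.2⟩
    have hpre : φ ⁻¹' ↑(Fintype.piFinset fun _ : Fin (n + 1) => V) =
        (V : Set X) ×ˢ ↑(Fintype.piFinset fun _ : Fin n => V) := by
      ext z
      simp [φ, Fin.forall_fin_succ]
    refine of_isometryEquiv φ ?_
    rw [hpre, pow_succ']
    exact ih.prod he hV heV

lemma exists_monochromatic {C : Type*} [Fintype C] {A : Finset Y} {F : ℕ}
    (h : ForcesCopy M (A : Set Y) F) (hcard : Fintype.card C * F < #A) (c : Y → C) :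
    ∃ f : M → Y, Isometry f ∧ ∀ x y, c (f x) = c (f y) := by
  classical
  obtain ⟨col, -, hcol⟩ := Finset.exists_lt_card_fiber_of_mul_lt_card_of_maps_to
    (fun a _ => Finset.mem_univ (c a)) hcard
  obtain ⟨f, hf, hfcol⟩ := h _ (Finset.coe_subset.2 (Finset.filter_subset _ A)) hcol
  have hc : ∀ x, c (f x) = col := fun x => (Finset.mem_filter.1 (hfcol x)).2
  exact ⟨f, hf, fun x y => (hc x).trans (hc y).symm⟩

end ForcesCopy

end Copies

section Connected

variable {M X : Type*} [MetricSpace M] [Finite M] [PseudoMetricSpace X]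

variable (M) in
lemma eventually_isShortStep (u : X) : ∀ᶠ v in 𝓝 u, IsShortStep M u v := by
  simp only [IsShortStep, eventually_all]
  intro x y hxy
  filter_upwards [Metric.ball_mem_nhds u (dist_pos.2 hxy)] with v hv
  exact (Metric.mem_ball'.1 hv).le

variable (M) in
lemma reflTransGen_isShortStep [PreconnectedSpace X] (u v : X) :
    Relation.ReflTransGen (IsShortStep M) u v := by
  refine PreconnectedSpace.induction₂' _ (fun u => ?_) inferInstance u v
  filter_upwards [eventually_isShortStep M u] with v huv
  exact ⟨.single huv, .single fun x y hxy => (dist_comm v u).trans_le (huv x y hxy)⟩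

theorem stmt_8_general [PreconnectedSpace X] {e : M → X} (he : Isometry e) :
    ∃ χ : ℝ, 1 < χ ∧ ∀ n N : ℕ, (N : ℝ) < χ ^ n → ∀ c : (Fin n → X) → Fin N,
      ∃ f : M → Fin n → X, Isometry f ∧ ∀ x y, c (f x) = c (f y) := by
  obtain hM | ⟨a, b, hab⟩ := subsingleton_or_nontrivial M
  · exact ⟨2, one_lt_two, fun n N _ c => ⟨fun x _ => e x, isometry_subsingleton,
      fun x y => by rw [Subsingleton.elim x y]⟩⟩
  have : Nonempty X := ⟨e a⟩
  obtain ⟨V, hV, hrange⟩ :=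
    RelConnected.exists_superset (reflTransGen_isShortStep M) (Set.finite_range e)
  have heV : ∀ x, e x ∈ V := fun x => hrange (Set.mem_range_self x)
  have hVcard : 1 < #V := Finset.one_lt_card.2 ⟨e a, heV a, e b, heV b, he.injective.ne hab⟩
  have hpos : (0 : ℝ) < (#V - 1 : ℕ) := by exact_mod_cast Nat.sub_pos_of_lt hVcard
  refine ⟨#V / (#V - 1 : ℕ), ?_, fun n N hN c => ?_⟩
  · rw [one_lt_div hpos]
    exact_mod_cast Nat.sub_one_lt_of_lt hVcard
  have hN' : N * (#V - 1) ^ n < #V ^ n := by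
    rw [div_pow, lt_div_iff₀ (pow_pos hpos n)] at hN
    exact_mod_cast hN
  exact (ForcesCopy.pi he hV heV n).exists_monochromatic (by simpa using hN') c

end Connected

lemma dist_sum_range {α : ℕ → ℝ} {s t : ℕ} (hst : s ≤ t) (hα : ∀ i ∈ Finset.Ico s t, 0 ≤ α i) :
    dist (∑ i ∈ Finset.range s, α i) (∑ i ∈ Finset.range t, α i) = ∑ i ∈ Finset.Ico s t, α i := by
  rw [dist_comm, Real.dist_eq, ← Finset.sum_Ico_eq_sub α hst, abs_of_nonneg (Finset.sum_nonneg hα)]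

/-- Every baton `B(α_1, …, α_k)` is exponentially `ℓ∞`-Ramsey: there are `χ > 1`
and `δ(n) → 0` such that any coloring of `ℝ^n` (max metric) with fewer than
`(χ + δ n)^n` colors contains a monochromatic isometric copy of the baton. -/
theorem stmt_8 (k : ℕ) (hk : 0 < k) (α : ℕ → ℝ) (hα : ∀ i < k, 0 < α i) :
    ∃ χ : ℝ, 1 < χ ∧ ∃ δ : ℕ → ℝ,
      Filter.Tendsto δ Filter.atTop (nhds 0) ∧
      ∀ n : ℕ, 0 < n → ∀ N : ℕ, (N : ℝ) < (χ + δ n) ^ n →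
        ∀ c : (Fin n → ℝ) → Fin N,
          ∃ y : Fin (k + 1) → (Fin n → ℝ),
            (∀ s t : Fin (k + 1), c (y s) = c (y t)) ∧
            ∀ s t : Fin (k + 1), s < t →
              dist (y s) (y t) = ∑ i ∈ Finset.Ico (s : ℕ) (t : ℕ), α i := by
  let p : Fin (k + 1) → ℝ := fun s => ∑ i ∈ Finset.range s, α i
  obtain ⟨χ, hχ, hcopy⟩ := stmt_8_general (isometry_subtype_coe (s := Set.range p))
  refine ⟨χ, hχ, 0, tendsto_const_nhds, fun n _ N hN c => ?_⟩
  obtain ⟨f, hf, hc⟩ := hcopy n N (by simpa using hN) c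
  refine ⟨f ∘ Set.rangeFactorization p, fun _ _ => hc _ _, fun s t hst => (hf.dist_eq _ _).trans ?_⟩
  exact dist_sum_range hst.le fun i hi => (hα i (by have := (Finset.mem_Ico.1 hi).2; omega)).le
end

section
/- Let d and l be positive integers with l < d and set m = d + l. Let C = [0, d)^n and 𝒞 = ⋃_{v∈Z^n}(C + m v). Then there exists a set of at most n·(log d)·(m/d)^n + (m/d)^n + 1 translates of 𝒞 whose union is all of R^n. Consequently, if M is a finite metric space with at least 2 points, integer diameter d(M) = d and integer connectivity radius l(M) = l, then χ(R^n_∞; M) ≤ (1+o(1))·n·log d·(1 + l/d)^n. -/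
/-!
The sets `𝒞 + t` are handled on the finite torus `(ℤ/mℤ)ⁿ`, where a proportion `p = (d/m)ⁿ` of the
translations `t` covers any given point. Averaging over `t`, some translate covers a proportion `p`
of whatever is still uncovered, so `⌈L⌉` greedy steps leave at most `(1 - p)^⌈L⌉ mⁿ ≤ e^{-pL} mⁿ`
points, which are covered one by one; `L = n log d (m/d)ⁿ` makes `e^{-pL} mⁿ = (m/d)ⁿ`.

Distinct cubes of `𝒞` are more than `l` apart and each is half-open of side `d`, so a chain with
steps at most `l` inside `𝒞` stays in one cube and its ends are at distance less than `d`. Hence the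
coloring that gives `x` a translate of `𝒞` containing it has no monochromatic copy of `M`.
-/

open Filter Finset Relation Topology

section GreedyCovering

variable {α β : Type*} {r : α → β → Prop} [∀ a b, Decidable (r a b)] {s : Finset α}
  {t : Finset β} {p : ℝ}

theorem exists_mul_card_le_card_bipartiteAbove (hs : s.Nonempty)
    (hr : ∀ b ∈ t, p * #s ≤ #(s.bipartiteBelow r b)) :
    ∃ a ∈ s, p * #t ≤ #(t.bipartiteAbove r a) := by
  refine exists_le_of_sum_le hs ?_
  calc ∑ _a ∈ s, p * #t = ∑ _b ∈ t, p * #s := by simp only [sum_const, nsmul_eq_mul]; ring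
    _ ≤ ∑ b ∈ t, (#(s.bipartiteBelow r b) : ℝ) := sum_le_sum hr
    _ = ∑ a ∈ s, (#(t.bipartiteAbove r a) : ℝ) := by
      exact_mod_cast (sum_card_bipartiteAbove_eq_sum_card_bipartiteBelow r).symm

theorem exists_card_uncovered_le_pow (hs : s.Nonempty) (hp : p ≤ 1)
    (hr : ∀ b ∈ t, p * #s ≤ #(s.bipartiteBelow r b)) (k : ℕ) :
    ∃ u ⊆ s, #u ≤ k ∧ (#{b ∈ t | ∀ a ∈ u, ¬ r a b} : ℝ) ≤ (1 - p) ^ k * #t := by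
  classical
  induction k with
  | zero => exact ⟨∅, by simp⟩
  | succ k ih =>
    obtain ⟨u, hus, huk, hu⟩ := ih
    set w := {b ∈ t | ∀ a ∈ u, ¬ r a b}
    obtain ⟨a, has, ha⟩ := exists_mul_card_le_card_bipartiteAbove hs
      fun b (hb : b ∈ w) ↦ hr b (mem_filter.1 hb).1
    refine ⟨insert a u, insert_subset has hus, (card_insert_le a u).trans (by lia), ?_⟩
    have huncovered : {b ∈ t | ∀ a' ∈ insert a u, ¬ r a' b} = {b ∈ w | ¬ r a b} := by
      simp only [w, forall_mem_insert, filter_filter, and_comm]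
    have hsplit : (#(w.bipartiteAbove r a) : ℝ) + #{b ∈ w | ¬ r a b} = #w := by
      exact_mod_cast card_filter_add_card_filter_not (s := w) (r a)
    calc (#{b ∈ t | ∀ a' ∈ insert a u, ¬ r a' b} : ℝ) = #{b ∈ w | ¬ r a b} := by rw [huncovered]
      _ ≤ (1 - p) * #w := by linarith
      _ ≤ (1 - p) * ((1 - p) ^ k * #t) := mul_le_mul_of_nonneg_left hu (sub_nonneg.2 hp)
      _ = (1 - p) ^ (k + 1) * #t := by ring

theorem one_sub_pow_ceil_le_exp_neg_mul {x : ℝ} (hp₀ : 0 ≤ p) (hp₁ : p ≤ 1) :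
    (1 - p) ^ ⌈x⌉₊ ≤ Real.exp (-(p * x)) :=
  calc (1 - p) ^ ⌈x⌉₊ ≤ Real.exp (-p) ^ ⌈x⌉₊ :=
        pow_le_pow_left₀ (sub_nonneg.2 hp₁) (Real.one_sub_le_exp_neg p) _
    _ = Real.exp (-(p * ⌈x⌉₊)) := by rw [← Real.exp_nat_mul]; ring_nf
    _ ≤ Real.exp (-(p * x)) := by gcongr; exact Nat.le_ceil x

theorem exists_cover_card_le_add_exp (hs : s.Nonempty) (hp₀ : 0 < p) (hp₁ : p ≤ 1)
    (hr : ∀ b ∈ t, p * #s ≤ #(s.bipartiteBelow r b)) {x : ℝ} (hx : 0 ≤ x) :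
    ∃ u ⊆ s, (#u : ℝ) ≤ x + Real.exp (-(p * x)) * #t + 1 ∧ ∀ b ∈ t, ∃ a ∈ u, r a b := by
  classical
  obtain ⟨u, hus, hux, hu⟩ := exists_card_uncovered_le_pow hs hp₁ hr ⌈x⌉₊
  have hcoverable : ∀ b ∈ t, ∃ a ∈ s, r a b := fun b hb ↦ by
    have hpos : (0 : ℝ) < #(s.bipartiteBelow r b) :=
      (mul_pos hp₀ (Nat.cast_pos.2 hs.card_pos)).trans_le (hr b hb)
    simpa only [Finset.Nonempty, mem_bipartiteBelow] using card_pos.1 (Nat.cast_pos.1 hpos)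
  have : Nonempty α := hs.to_type
  choose! g hgs hg using hcoverable
  set w := {b ∈ t | ∀ a ∈ u, ¬ r a b}
  refine ⟨u ∪ w.image g, union_subset hus ?_, ?_, fun b hb ↦ ?_⟩
  · exact image_subset_iff.2 fun b hb ↦ hgs b (mem_filter.1 hb).1
  · have hw : (#w : ℝ) ≤ Real.exp (-(p * x)) * #t :=
      hu.trans (by gcongr; exact one_sub_pow_ceil_le_exp_neg_mul hp₀.le hp₁)
    calc (#(u ∪ w.image g) : ℝ) ≤ #u + #w := by
          exact_mod_cast (card_union_le _ _).trans (by gcongr; exact card_image_le)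
      _ ≤ ⌈x⌉₊ + #w := by gcongr
      _ ≤ x + Real.exp (-(p * x)) * #t + 1 := by linarith [Nat.ceil_lt_add_one hx]
  · by_cases hbu : ∃ a ∈ u, r a b
    · obtain ⟨a, ha, hab⟩ := hbu
      exact ⟨a, mem_union_left _ ha, hab⟩
    · have hbw : b ∈ w := mem_filter.2 ⟨hb, by simpa using hbu⟩
      exact ⟨g b, mem_union_right _ (mem_image_of_mem g hbw), hg b hb⟩

end GreedyCovering

section Torus

variable {m d : ℕ} [NeZero m]

theorem card_filter_zmod_val_lt (hdm : d ≤ m) : #{a : ZMod m | a.val < d} = d := by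
  obtain ⟨k, rfl⟩ := Nat.exists_eq_succ_of_ne_zero (NeZero.ne m)
  exact Fin.card_filter_val_lt.trans (min_eq_right hdm)

theorem card_filter_forall_zmod_val_sub_lt {ι : Type*} [Fintype ι] [DecidableEq ι] (hdm : d ≤ m)
    (u : ι → ZMod m) : #{t : ι → ZMod m | ∀ i, (u i - t i).val < d} = d ^ Fintype.card ι := by
  have htranslate : #{t : ι → ZMod m | ∀ i, (u i - t i).val < d}
      = #(Fintype.piFinset fun _ : ι ↦ ({a | a.val < d} : Finset (ZMod m))) :=
    card_equiv (Equiv.subLeft u) fun t ↦ by simp [Fintype.mem_piFinset]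
  rw [htranslate, Fintype.card_piFinset, prod_const, card_filter_zmod_val_lt hdm, card_univ]

theorem exists_torus_cover {ι : Type*} [Fintype ι] (hd : 0 < d) (hdm : d ≤ m) :
    ∃ T : Finset (ι → ZMod m),
      (#T : ℝ) ≤ Fintype.card ι * Real.log d * ((m : ℝ) / d) ^ Fintype.card ι
          + ((m : ℝ) / d) ^ Fintype.card ι + 1 ∧
        ∀ u : ι → ZMod m, ∃ t ∈ T, ∀ i, (u i - t i).val < d := by
  classical
  set n := Fintype.card ι
  have hd' : (0 : ℝ) < d := Nat.cast_pos.2 hd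
  have hm : (0 : ℝ) < m := Nat.cast_pos.2 (NeZero.pos m)
  have hcard : (#(univ : Finset (ι → ZMod m)) : ℝ) = (m : ℝ) ^ n := by
    simp [n, ZMod.card]
  set p : ℝ := ((d : ℝ) / m) ^ n
  set L : ℝ := n * Real.log d * ((m : ℝ) / d) ^ n
  have hp₁ : p ≤ 1 := pow_le_one₀ (by positivity) ((div_le_one hm).2 (Nat.cast_le.2 hdm))
  have hL : 0 ≤ L := by have := Real.log_natCast_nonneg d; positivity
  have hdensity : p * (m : ℝ) ^ n = (d : ℝ) ^ n := by
    rw [← mul_pow, div_mul_cancel₀ _ hm.ne']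
  have hpL : p * L = n * Real.log d := by
    have : p * ((m : ℝ) / d) ^ n = 1 := by
      rw [← mul_pow, div_mul_div_cancel₀ hm.ne', div_self hd'.ne', one_pow]
    linear_combination n * Real.log d * this
  have hleft : Real.exp (-(p * L)) * (m : ℝ) ^ n = ((m : ℝ) / d) ^ n := by
    rw [hpL, Real.exp_neg, Real.exp_nat_mul, Real.exp_log hd', div_pow, inv_mul_eq_div]
  obtain ⟨T, -, hT, hcover⟩ := exists_cover_card_le_add_exp
    (r := fun t u : ι → ZMod m ↦ ∀ i, (u i - t i).val < d) (t := univ) univ_nonempty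
    (show 0 < p by positivity) hp₁ (fun u _ ↦ by
      rw [hcard, hdensity]
      exact_mod_cast (card_filter_forall_zmod_val_sub_lt hdm u).ge) hL
  rw [hcard, hleft] at hT
  exact ⟨T, hT, fun u ↦ hcover u (mem_univ u)⟩

end Torus

section LatticeCubes

variable {ι : Type*}

/-- The half-open cube `[0, d)^ι + m v` of side `d` at the point `m v` of the lattice `m ℤ^ι`. -/
def latticeCube (d m : ℝ) (v : ι → ℤ) : Set (ι → ℝ) :=
  {x | ∀ i, x i ∈ Set.Ico (m * v i) (m * v i + d)}

/-- The union `𝒞` of the cubes `[0, d)^ι + m v` over all lattice points `m v`. -/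
def latticeCubes (d m : ℝ) : Set (ι → ℝ) :=
  {x | ∃ v, x ∈ latticeCube d m v}

theorem mem_Ico_of_floor_emod_lt {m d : ℕ} (hm : m ≠ 0) {y : ℝ} (hy : ⌊y⌋ % m < d) :
    y ∈ Set.Ico ((m : ℝ) * (⌊y⌋ / m : ℤ)) ((m : ℝ) * (⌊y⌋ / m : ℤ) + d) := by
  have hdiv := Int.mul_ediv_add_emod ⌊y⌋ m
  have hmod : 0 ≤ ⌊y⌋ % (m : ℤ) := Int.emod_nonneg _ (Int.natCast_ne_zero.2 hm)
  constructor
  · have hlower : m * (⌊y⌋ / m) ≤ ⌊y⌋ := by linarith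
    exact_mod_cast Int.le_floor.1 hlower
  · have hupper : ⌊y⌋ < m * (⌊y⌋ / m) + d := by linarith
    exact_mod_cast Int.floor_lt.1 hupper

theorem sub_val_mem_latticeCubes {m d : ℕ} [NeZero m] {x : ι → ℝ} {t : ι → ZMod m}
    (h : ∀ i, ((⌊x i⌋ : ZMod m) - t i).val < d) :
    x - (fun i ↦ ((t i).val : ℝ)) ∈ latticeCubes (d : ℝ) m := by
  refine ⟨_, fun i ↦ mem_Ico_of_floor_emod_lt (NeZero.ne m) ?_⟩
  have hfloor : ((⌊x i - (t i).val⌋ : ℤ) : ZMod m) = ⌊x i⌋ - t i := by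
    rw [Int.floor_sub_natCast]
    simp
  rw [Pi.sub_apply, ← ZMod.val_intCast, hfloor]
  exact_mod_cast h i

theorem exists_translates_latticeCubes_cover [Fintype ι] {d m : ℕ} (hd : 0 < d) (hdm : d ≤ m) :
    ∃ T : Finset (ι → ℝ),
      (#T : ℝ) ≤ Fintype.card ι * Real.log d * ((m : ℝ) / d) ^ Fintype.card ι
          + ((m : ℝ) / d) ^ Fintype.card ι + 1 ∧
        ∀ x : ι → ℝ, ∃ t ∈ T, x - t ∈ latticeCubes (d : ℝ) m := by
  classical
  have : NeZero m := ⟨by lia⟩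
  obtain ⟨T, hT, hcover⟩ := exists_torus_cover (ι := ι) hd hdm
  refine ⟨T.image fun t i ↦ ((t i).val : ℝ),
    (Nat.cast_le.2 card_image_le).trans hT, fun x ↦ ?_⟩
  obtain ⟨t, ht, hxt⟩ := hcover fun i ↦ (⌊x i⌋ : ZMod m)
  exact ⟨_, mem_image_of_mem _ ht, sub_val_mem_latticeCubes hxt⟩

variable [Fintype ι] {d m : ℝ} {v w : ι → ℤ} {x y : ι → ℝ}

theorem dist_lt_of_mem_latticeCube (hd : 0 < d) (hx : x ∈ latticeCube d m v)
    (hy : y ∈ latticeCube d m v) : dist x y < d := by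
  refine (dist_pi_lt_iff hd).2 fun i ↦ abs_lt.2 ⟨?_, ?_⟩ <;>
    linarith [(hx i).1, (hx i).2, (hy i).1, (hy i).2]

theorem le_of_mem_latticeCube_of_dist_le (hx : x ∈ latticeCube d m v)
    (hy : y ∈ latticeCube d m w) (hxy : dist x y ≤ m - d) : v ≤ w := by
  intro i
  have hdist : x i - y i ≤ m - d :=
    (le_abs_self _).trans ((dist_le_pi_dist x y i).trans hxy)
  have hm : 0 < m := by linarith [dist_nonneg.trans hxy, (hx i).1, (hx i).2]
  have hlt : m * v i < m * (w i + 1) := by linarith [(hx i).1, (hy i).2]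
  exact Int.lt_add_one_iff.1 (by exact_mod_cast lt_of_mul_lt_mul_left hlt hm.le)

theorem eq_of_mem_latticeCube_of_dist_le (hx : x ∈ latticeCube d m v)
    (hy : y ∈ latticeCube d m w) (hxy : dist x y ≤ m - d) : v = w :=
  le_antisymm (le_of_mem_latticeCube_of_dist_le hx hy hxy)
    (le_of_mem_latticeCube_of_dist_le hy hx (by rwa [dist_comm]))

theorem dist_lt_of_isometry_of_mem_latticeCubes {M : Type*} [PseudoMetricSpace M]
    {f : M → ι → ℝ} (hf : Isometry f) (hd : 0 < d) (hmem : ∀ a, f a ∈ latticeCubes d m)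
    {a b : M} (hab : ReflTransGen (fun a b ↦ dist a b ≤ m - d) a b) : dist a b < d := by
  choose v hv using hmem
  have hsame : v a = v b := by
    induction hab with
    | refl => rfl
    | tail _ hstep ih =>
      exact ih.trans
        (eq_of_mem_latticeCube_of_dist_le (hv _) (hv _) ((hf.dist_eq _ _).trans_le hstep))
  rw [← hf.dist_eq]
  exact dist_lt_of_mem_latticeCube hd (hv a) (hsame ▸ hv b)

end LatticeCubes

section Coloring

theorem exists_coloring_of_translates_cover {E : Type*} [Sub E] {S : Set E} {T : Finset E}
    (hT : ∀ x, ∃ t ∈ T, x - t ∈ S) :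
    ∃ c : E → Fin #T, ∀ k, ∃ t, ∀ x, c x = k → x - t ∈ S := by
  choose g hgT hg using hT
  refine ⟨fun x ↦ T.equivFin ⟨g x, hgT x⟩, fun k ↦ ⟨T.equivFin.symm k, ?_⟩⟩
  rintro x rfl
  simpa using hg x

theorem exists_ne_of_translates_latticeCubes {ι C M : Type*} [Fintype ι] [PseudoMetricSpace M]
    {d m : ℝ} (hd : 0 < d) {c : (ι → ℝ) → C}
    (hc : ∀ k, ∃ t, ∀ x, c x = k → x - t ∈ latticeCubes d m) {a b : M} (hdist : d ≤ dist a b)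
    (hab : ReflTransGen (fun a b ↦ dist a b ≤ m - d) a b) {f : M → ι → ℝ} (hf : Isometry f) :
    ∃ a b, c (f a) ≠ c (f b) := by
  by_contra! hmono
  obtain ⟨t, ht⟩ := hc (c (f a))
  have hf' : Isometry fun x ↦ f x - t :=
    Isometry.of_dist_eq fun x y ↦ (dist_sub_right _ _ _).trans (hf.dist_eq x y)
  exact hdist.not_gt
    (dist_lt_of_isometry_of_mem_latticeCubes hf' hd (fun x ↦ ht _ (hmono x a)) hab)

theorem reflTransGen_of_forall_lt {M : Type*} {r : M → M → Prop} {z : ℕ → M} {t : ℕ}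
    (h : ∀ i < t, r (z i) (z (i + 1))) : ReflTransGen r (z 0) (z t) :=
  ReflTransGen.lift z (fun _ _ ↦ id) _ _ <|
    reflTransGen_of_succ_of_le (fun i j ↦ r (z i) (z j)) (fun i hi ↦ h i hi.2) t.zero_le

end Coloring

theorem mul_add_self_add_one_le_one_add_div_mul {a x q : ℝ} (ha : 0 < a) (hx : 0 < x)
    (hq : 1 ≤ q) : x * a * q + q + 1 ≤ (1 + 2 / a / x) * x * a * q := by
  have hexpand : (1 + 2 / a / x) * x * a * q = x * a * q + 2 * q := by field_simp
  linarith

universe u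

theorem stmt_15_general {d : ℕ} (hd : 1 < d) (l : ℕ) :
    (∀ n : ℕ, ∃ T : Finset (Fin n → ℝ),
      ((#T : ℝ) ≤
        (n : ℝ) * Real.log d * (((d : ℝ) + l) / d) ^ n + (((d : ℝ) + l) / d) ^ n + 1) ∧
      ∀ x, ∃ t ∈ T, x - t ∈ latticeCubes (d : ℝ) (d + l)) ∧
    ∃ δ : ℕ → ℝ, Tendsto δ atTop (𝓝 0) ∧
      ∀ n : ℕ, 0 < n → ∃ N : ℕ,
        (N : ℝ) ≤ (1 + δ n) * n * Real.log d * (1 + (l : ℝ) / d) ^ n ∧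
        ∃ c : (Fin n → ℝ) → Fin N, ∀ (M : Type u) [PseudoMetricSpace M],
          (∃ x y : M, dist x y = d) →
          (∀ x y : M, ∃ (t : ℕ) (z : ℕ → M),
            z 0 = x ∧ z t = y ∧ ∀ i < t, dist (z i) (z (i + 1)) ≤ l) →
          ∀ f : M → Fin n → ℝ, Isometry f → ∃ x y, c (f x) ≠ c (f y) := by
  have hd₀ : (0 : ℝ) < d := by positivity
  have hcover := fun n : ℕ ↦
    exists_translates_latticeCubes_cover (ι := Fin n) (zero_lt_one.trans hd) (d.le_add_right l)
  simp only [Fintype.card_fin, Nat.cast_add] at hcover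
  refine ⟨hcover, fun n ↦ 2 / Real.log d / n, tendsto_const_div_atTop_nhds_zero_nat _,
    fun n hn ↦ ?_⟩
  obtain ⟨T, hT, hTcover⟩ := hcover n
  obtain ⟨c, hc⟩ := exists_coloring_of_translates_cover hTcover
  refine ⟨#T, ?_, c, fun M _ ⟨x, y, hxy⟩ hchain f hf ↦ ?_⟩
  · rw [add_div, div_self hd₀.ne'] at hT
    exact hT.trans (mul_add_self_add_one_le_one_add_div_mul (Real.log_pos (by exact_mod_cast hd))
      (Nat.cast_pos.2 hn) (one_le_pow₀ (le_add_of_nonneg_right (by positivity))))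
  · obtain ⟨t, z, rfl, rfl, hz⟩ := hchain x y
    exact exists_ne_of_translates_latticeCubes hd₀ hc hxy.ge
      (reflTransGen_of_forall_lt (by simpa using hz)) hf

/-- Covering bound and chromatic consequence. Let `l < d` be positive integers
and `m = d + l`. First, `ℝ^n` can be covered by at most
`n·log d·(m/d)^n + (m/d)^n + 1` translates of `𝒞 = ⋃_{v∈ℤ^n}([0,d)^n + m v)`.
Consequently, every finite metric space `M` with at least two points, diameter
`d` and connectivity radius `l` satisfies
`χ(ℝ^n_∞; M) ≤ (1 + o(1))·n·log d·(1 + l/d)^n`. -/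
theorem stmt_15 (d l : ℕ) (hl : 0 < l) (hld : l < d) :
    (∀ n : ℕ, 0 < n →
      ∃ T : Finset (Fin n → ℝ),
        ((T.card : ℝ) ≤
          (n : ℝ) * Real.log d * (((d : ℝ) + l) / d) ^ n + (((d : ℝ) + l) / d) ^ n + 1) ∧
        ∀ x : Fin n → ℝ, ∃ t ∈ T, ∃ v : Fin n → ℤ, ∀ i : Fin n,
          ((d : ℝ) + l) * (v i : ℝ) ≤ x i - t i ∧
            x i - t i < ((d : ℝ) + l) * (v i : ℝ) + d) ∧
    (∀ (M : Type) [MetricSpace M] [Fintype M], 2 ≤ Fintype.card M →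
      IsGreatest {r : ℝ | ∃ x y : M, dist x y = r} (d : ℝ) →
      IsLeast {l' : ℝ | 0 < l' ∧ ∀ x y : M, ∃ (t : ℕ) (z : ℕ → M),
        z 0 = x ∧ z t = y ∧ ∀ i < t, dist (z i) (z (i + 1)) ≤ l'} (l : ℝ) →
      ∃ δ : ℕ → ℝ, Filter.Tendsto δ Filter.atTop (nhds 0) ∧
        ∀ n : ℕ, 0 < n → ∃ N : ℕ,
          (N : ℝ) ≤ (1 + δ n) * n * Real.log d * (1 + (l : ℝ) / d) ^ n ∧
          ∃ c : (Fin n → ℝ) → Fin N,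
            ∀ f : M → (Fin n → ℝ),
              (∀ x y : M, dist (f x) (f y) = dist x y) →
              ∃ x y : M, c (f x) ≠ c (f y)) := by
  obtain ⟨hcover, δ, hδ, hcolor⟩ := stmt_15_general (d := d) (by lia) l
  exact ⟨fun n _ ↦ hcover n, fun M _ _ _ hdiam hconn ↦ ⟨δ, hδ, fun n hn ↦
    let ⟨N, hN, c, hc⟩ := hcolor n hn
    ⟨N, hN, c, fun f hf ↦ hc M hdiam.1 hconn.1.2 f (.of_dist_eq hf)⟩⟩⟩
end
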